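/- Let M be an acyclic matching on the graph G(C•) of the chain complex C•. Then for every edge (α,β,[α:β]) ∈ M with α ∈ X_{i+1} and β ∈ X_i, and for every critical basis element c ∈ X_{i−1}^M, one has Γ↓(β,c) = Σ_{c' ∈ X_i^M} Γ↑(β,c')·Γ↓(c',c). -/

import Mathlib

/-!
Algebraic Discrete Morse theory (Jöllenbeck–Welker).

Setup: `R` is a (possibly noncommutative) ring and `C` is a chain complex of free
left `R`-modules `C i = X i → R` with fixed finite basis `X i` in homological
degree `i`; the differential is `∂ i (c) = ∑ c', d i c c' • c'` (we record only the
matrix of coefficients `d`).  `M` is a matching on the associated weighted directed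
graph, `MStep` describes the edges of the modified graph `G_M`, `MPath` the directed
paths, `Gamma v w` the sum of the weights of all paths from `v` to `w`, `Crit` the
critical basis elements, `DMmap` the Morse differential, and `fmap`, `gmap`, `chimap`
the comparison maps and the homotopy.
-/

attribute [local instance] Classical.propDecidable

noncomputable section

section ADMT

variable {R : Type} [Ring R]
variable (X : ℕ → Type) [∀ i, Fintype (X i)]
variable (d : ∀ i, X (i + 1) → X i → R)
variable (M : ∀ i, Set (X (i + 1) × X i))

/-- The family of coefficients `d` of the differentials satisfies `∂ ∘ ∂ = 0`,
i.e. `C` is a chain complex. -/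
def IsComplexAux : Prop :=
  ∀ (i : ℕ) (c : X (i + 2)) (c'' : X i),
    ∑ c' : X (i + 1), d (i + 1) c c' * d i c' c'' = 0

/-- The edges of the modified graph `G_M`: downward steps along non-matched edges
of the graph `G(C)` (weight `d i c c'`), and upward reversed steps along matched
edges (weight `-(d i c c')⁻¹`). -/
inductive MStep : (Σ i, X i) → (Σ i, X i) → Prop
  | down (i : ℕ) (c : X (i + 1)) (c' : X i) (hne : d i c c' ≠ 0)
      (hnm : (c, c') ∉ M i) : MStep ⟨i + 1, c⟩ ⟨i, c'⟩
  | up (i : ℕ) (c : X (i + 1)) (c' : X i) (hmem : (c, c') ∈ M i) :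
      MStep ⟨i, c'⟩ ⟨i + 1, c⟩

/-- `M` is an acyclic matching: all edges of `M` are edges of the graph `G(C)`,
every vertex lies in at most one edge of `M`, the weights of matched edges are
central units of `R`, and the modified graph `G_M` has no directed cycle. -/
def IsAcyclicMatching : Prop :=
  (∀ (i : ℕ) (c : X (i + 1)) (c' : X i), (c, c') ∈ M i → d i c c' ≠ 0) ∧
  (∀ (i : ℕ) (c : X (i + 1)) (c₁ c₂ : X i), (c, c₁) ∈ M i → (c, c₂) ∈ M i → c₁ = c₂) ∧
  (∀ (i : ℕ) (c₁ c₂ : X (i + 1)) (c' : X i), (c₁, c') ∈ M i → (c₂, c') ∈ M i → c₁ = c₂) ∧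
  (∀ (i : ℕ) (a : X (i + 2)) (b : X (i + 1)) (c : X i),
      (a, b) ∈ M (i + 1) → (b, c) ∈ M i → False) ∧
  (∀ (i : ℕ) (c : X (i + 1)) (c' : X i), (c, c') ∈ M i →
      d i c c' ∈ Set.center R ∧ IsUnit (d i c c')) ∧
  (∀ v : Σ i, X i, ¬ Relation.TransGen (MStep X d M) v v)

/-- Directed paths in the modified graph `G_M`. -/
inductive MPath : (Σ i, X i) → (Σ i, X i) → Type
  | nil (v : Σ i, X i) : MPath v v
  | down (i : ℕ) (c : X (i + 1)) (c' : X i) (hne : d i c c' ≠ 0)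
      (hnm : (c, c') ∉ M i) (w : Σ i, X i) (p : MPath ⟨i, c'⟩ w) :
      MPath ⟨i + 1, c⟩ w
  | up (i : ℕ) (c : X (i + 1)) (c' : X i) (hmem : (c, c') ∈ M i)
      (w : Σ i, X i) (p : MPath ⟨i + 1, c⟩ w) : MPath ⟨i, c'⟩ w

/-- The weight of a path: the product of the weights of its edges.  A non-matched
edge `c → c'` has weight `d i c c'`; a reversed matched edge has weight
`-(d i c c')⁻¹`. -/
def MPath.weight : ∀ {v w : Σ i, X i}, MPath X d M v w → R
  | _, _, .nil _ => 1
  | _, _, .down i c c' _ _ _ p => d i c c' * MPath.weight p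
  | _, _, .up i c c' _ _ p => -(Ring.inverse (d i c c')) * MPath.weight p

/-- The first step of the path decreases the homological degree. -/
def MPath.firstDown : ∀ {v w : Σ i, X i}, MPath X d M v w → Prop
  | _, _, .nil _ => False
  | _, _, .down _ _ _ _ _ _ _ => True
  | _, _, .up _ _ _ _ _ _ => False

/-- The first step of the path increases the homological degree. -/
def MPath.firstUp : ∀ {v w : Σ i, X i}, MPath X d M v w → Prop
  | _, _, .nil _ => False
  | _, _, .down _ _ _ _ _ _ _ => False
  | _, _, .up _ _ _ _ _ _ => True

/-- `Γ(v,w)`: the sum of the weights of all directed paths from `v` to `w` in `G_M`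
(under the acyclicity hypothesis there are only finitely many such paths). -/
def Gamma (v w : Σ i, X i) : R := ∑ᶠ p : MPath X d M v w, MPath.weight X d M p

/-- `Γ↓(v,w)`: the sum of the weights of all paths from `v` to `w` whose first step
decreases the homological degree. -/
def GammaDown (v w : Σ i, X i) : R :=
  ∑ᶠ (p : MPath X d M v w) (_ : MPath.firstDown X d M p), MPath.weight X d M p

/-- `Γ↑(v,w)`: the sum of the weights of all paths from `v` to `w` whose first step
increases the homological degree. -/
def GammaUp (v w : Σ i, X i) : R :=
  ∑ᶠ (p : MPath X d M v w) (_ : MPath.firstUp X d M p), MPath.weight X d M p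

/-- A basis element is critical if it lies in no edge of `M`. -/
def CriticalV (v : Σ i, X i) : Prop :=
  ∀ (j : ℕ) (a : X (j + 1)) (b : X j), (a, b) ∈ M j →
    v ≠ ⟨j + 1, a⟩ ∧ v ≠ ⟨j, b⟩

/-- The critical basis elements of homological degree `i`. -/
abbrev Crit (i : ℕ) := {c : X i // CriticalV X M ⟨i, c⟩}

/-- The `R`-linear map between free left `R`-modules determined by a matrix of
coefficients. -/
def liftMap {α β : Type} [Fintype α] (w : α → β → R) :
    (α → R) →ₗ[R] (β → R) where
  toFun v b := ∑ a, v a * w a b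
  map_add' u v := by
    funext b
    simp [add_mul, Finset.sum_add_distrib]
  map_smul' r v := by
    funext b
    simp [Finset.mul_sum, mul_assoc]

/-- The differential `∂` of the original complex `C`. -/
def Dmap (i : ℕ) : (X (i + 1) → R) →ₗ[R] (X i → R) :=
  liftMap (fun c c' => d i c c')

/-- The Morse differential `∂^M (c) = ∑ Γ(c,c') • c'` on the critical cells. -/
def DMmap (i : ℕ) : (Crit X M (i + 1) → R) →ₗ[R] (Crit X M i → R) :=
  liftMap (fun c c' => Gamma X d M ⟨i + 1, c.1⟩ ⟨i, c'.1⟩)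

/-- The comparison map `f : C → C^M`, `f(c) = ∑ Γ(c,c') • c'`. -/
def fmap (i : ℕ) : (X i → R) →ₗ[R] (Crit X M i → R) :=
  liftMap (fun c c' => Gamma X d M ⟨i, c⟩ ⟨i, c'.1⟩)

/-- The comparison map `g : C^M → C`, `g(c) = ∑ Γ(c,c') • c'`. -/
def gmap (i : ℕ) : (Crit X M i → R) →ₗ[R] (X i → R) :=
  liftMap (fun c c' => Gamma X d M ⟨i, c.1⟩ ⟨i, c'⟩)

/-- The homotopy `χ : C_i → C_{i+1}`, `χ(c) = ∑ Γ(c,c') • c'`. -/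
def chimap (i : ℕ) : (X i → R) →ₗ[R] (X (i + 1) → R) :=
  liftMap (fun c c' => Gamma X d M ⟨i, c⟩ ⟨i + 1, c'⟩)

/-!
Fix a critical `c` in degree `i` and put `H x = ∑ y, d x y * Γ(y, c)`, the `c`-coefficient of
`fmap (∂ x)`.  Then `H` vanishes on upper ends of matched edges (the matched edge cancels all
other terms), agrees with `Γ↓(·, c)` elsewhere, and annihilates boundaries because `∂ ∘ ∂ = 0`.
Along a matched edge `(z, x)` the relation `∑ x', d z x' * H x' = 0` expresses `H x` through values
of `H` further along in the acyclic graph, so such an `H` is determined by its values on critical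
elements.  As each `Γ(·, c')` annihilates the same boundaries, `H = ∑ c', Γ(·, c') * H c'`, and
evaluating at `β` gives the result.
-/

theorem wellFounded_flip_of_finite_reachable {V : Type*} {r : V → V → Prop}
    (hfin : ∀ v, {w | Relation.ReflTransGen r v w}.Finite)
    (hacyc : ∀ v, ¬ Relation.TransGen r v v) : WellFounded (flip r) := by
  refine Subrelation.wf (fun {w v} (hvw : r v w) => ?_)
    (measure fun v => {w | Relation.ReflTransGen r v w}.ncard).wf
  refine Set.ncard_lt_ncard ⟨fun u hwu => hwu.head hvw, fun hsub => ?_⟩ (hfin v)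
  have hwv : Relation.ReflTransGen r w v := hsub Relation.ReflTransGen.refl
  exact hacyc v (Relation.TransGen.head' hvw hwv)

section MorseGraph

omit [∀ i, Fintype (X i)]

variable {X}

/-- `v` is the upper end `a` of a matched edge `a → b`. -/
inductive IsMatchedUpper : (Σ i, X i) → Prop
  | intro {i : ℕ} {a : X (i + 1)} {b : X i} (hab : (a, b) ∈ M i) : IsMatchedUpper ⟨i + 1, a⟩

/-- `v` is the lower end `b` of a matched edge `a → b`. -/
inductive IsMatchedLower : (Σ i, X i) → Prop
  | intro {i : ℕ} {a : X (i + 1)} {b : X i} (hab : (a, b) ∈ M i) : IsMatchedLower ⟨i, b⟩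

/-- An acyclic matching whose matched edges have weights that are units of `R`, central or not.
The first three fields say that every vertex lies in at most one matched edge. -/
structure IsAcyclicUnitMatching : Prop where
  lower_unique {i : ℕ} {a : X (i + 1)} {b₁ b₂ : X i} : (a, b₁) ∈ M i → (a, b₂) ∈ M i → b₁ = b₂
  upper_unique {i : ℕ} {a₁ a₂ : X (i + 1)} {b : X i} : (a₁, b) ∈ M i → (a₂, b) ∈ M i → a₁ = a₂
  not_isMatchedUpper {v : Σ i, X i} : IsMatchedLower M v → ¬ IsMatchedUpper M v
  isUnit {i : ℕ} {a : X (i + 1)} {b : X i} : (a, b) ∈ M i → IsUnit (d i a b)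
  acyclic (v : Σ i, X i) : ¬ Relation.TransGen (MStep X d M) v v

variable {d M} {v w : Σ i, X i} {n : ℕ}

theorem IsAcyclicMatching.isAcyclicUnitMatching (hM : IsAcyclicMatching X d M) :
    IsAcyclicUnitMatching d M := by
  obtain ⟨-, hlower, hupper, hdisj, hunit, hacyc⟩ := hM
  refine ⟨hlower _ _ _ _, hupper _ _ _ _, ?_, fun hab => (hunit _ _ _ hab).2, hacyc⟩
  rintro _ ⟨hab⟩ ⟨hbc⟩
  exact hdisj _ _ _ _ hab hbc

theorem criticalV_iff :
    CriticalV X M v ↔ ¬ IsMatchedUpper M v ∧ ¬ IsMatchedLower M v := by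
  refine ⟨fun h => ⟨?_, ?_⟩, fun h j a b hab => ⟨?_, ?_⟩⟩
  · rintro ⟨hab⟩
    exact (h _ _ _ hab).1 rfl
  · rintro ⟨hab⟩
    exact (h _ _ _ hab).2 rfl
  · rintro rfl
    exact h.1 ⟨hab⟩
  · rintro rfl
    exact h.2 ⟨hab⟩

namespace MPath

theorem reflTransGen (p : MPath X d M v w) : Relation.ReflTransGen (MStep X d M) v w := by
  induction p with
  | nil => exact .refl
  | down i c c' hne hnm _ _ ih => exact ih.head (.down i c c' hne hnm)
  | up i c c' hmem _ _ ih => exact ih.head (.up i c c' hmem)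

/-- The decomposition of a path into its first step and the remaining path; `none` for a path of
length zero. -/
def uncons : ∀ {v w : Σ i, X i}, MPath X d M v w →
    Option (Σ u : {u // MStep X d M v u}, MPath X d M u.1 w)
  | _, _, .nil _ => none
  | _, _, .down i c c' hne hnm _ p => some ⟨⟨⟨i, c'⟩, .down i c c' hne hnm⟩, p⟩
  | _, _, .up i c c' hmem _ p => some ⟨⟨⟨i + 1, c⟩, .up i c c' hmem⟩, p⟩

theorem uncons_injective : Function.Injective (uncons (d := d) (M := M) (v := v) (w := w)) := by
  intro p q hpq
  cases p <;> cases q <;> simp_all only [uncons, reduceCtorEq] <;> grind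

/-- A path starting with a step down is an unmatched edge followed by a path. -/
def firstDownEquiv (x : X (n + 1)) (w : Σ i, X i) :
    {p : MPath X d M ⟨n + 1, x⟩ w // MPath.firstDown X d M p} ≃
      Σ y : {y : X n // d n x y ≠ 0 ∧ (x, y) ∉ M n}, MPath X d M ⟨n, y.1⟩ w where
  toFun
    | ⟨.down _ _ y hne hnm _ p, _⟩ => ⟨⟨y, hne, hnm⟩, p⟩
  invFun q := ⟨.down n x q.1.1 q.1.2.1 q.1.2.2 w q.2, trivial⟩
  left_inv
    | ⟨.down _ _ _ _ _ _ _, _⟩ => rfl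
  right_inv _ := rfl

/-- A path starting with a step up reverses the matched edge at its initial vertex, and `z` is the
only possible upper end of that edge. -/
def firstUpEquiv {z : X (n + 1)} {y : X n} (hzy : (z, y) ∈ M n)
    (hz : ∀ z', (z', y) ∈ M n → z' = z) (w : Σ i, X i) :
    {p : MPath X d M ⟨n, y⟩ w // MPath.firstUp X d M p} ≃ MPath X d M ⟨n + 1, z⟩ w where
  toFun
    | ⟨.up _ z' _ hmem _ p, _⟩ => hz z' hmem ▸ p
  invFun p := ⟨.up n z y hzy w p, trivial⟩
  left_inv
    | ⟨.up _ z' _ hmem _ p, _⟩ => by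
      obtain rfl := hz z' hmem
      rfl
  right_inv _ := rfl

theorem finsum_weight_nil :
    ∑ᶠ (p : MPath X d M v w) (_ : ¬ MPath.firstDown X d M p ∧ ¬ MPath.firstUp X d M p),
      MPath.weight X d M p = if v = w then 1 else 0 := by
  split_ifs with hvw
  · subst hvw
    have hnil : {p : MPath X d M v v | ¬ MPath.firstDown X d M p ∧ ¬ MPath.firstUp X d M p} =
        {.nil v} := by
      ext p
      cases p <;> simp [MPath.firstDown, MPath.firstUp]
    exact (finsum_mem_congr hnil fun _ _ => rfl).trans finsum_mem_singleton
  · refine finsum_mem_eq_zero_of_forall_eq_zero fun p hp => ?_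
    cases p with
    | nil => exact absurd rfl hvw
    | down => exact absurd trivial hp.1
    | up => exact absurd trivial hp.2

end MPath

theorem gamma_eq_add [Finite (MPath X d M v w)] :
    Gamma X d M v w = (if v = w then 1 else 0) + GammaDown X d M v w + GammaUp X d M v w := by
  have := Fintype.ofFinite (MPath X d M v w)
  rw [← MPath.finsum_weight_nil (d := d) (M := M)]
  simp only [Gamma, GammaDown, GammaUp, finsum_eq_sum_of_fintype, finsum_eq_if]
  rw [← Finset.sum_add_distrib, ← Finset.sum_add_distrib]
  refine Finset.sum_congr rfl fun p _ => ?_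
  cases p <;> simp [MPath.firstDown, MPath.firstUp]

theorem gammaUp_of_not_isMatchedLower (hv : ¬ IsMatchedLower M v) : GammaUp X d M v w = 0 := by
  refine finsum_mem_eq_zero_of_forall_eq_zero fun p hp => ?_
  cases p with
  | nil => exact hp.elim
  | down => exact hp.elim
  | up _ _ _ hmem => exact absurd ⟨hmem⟩ hv

theorem gammaDown_eq_sum [Fintype (X n)] (x : X (n + 1)) (w : Σ i, X i)
    [∀ y : X n, Finite (MPath X d M ⟨n, y⟩ w)] :
    GammaDown X d M ⟨n + 1, x⟩ w =
      ∑ y : X n with (x, y) ∉ M n, d n x y * Gamma X d M ⟨n, y⟩ w := by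
  have := fun y : X n => Fintype.ofFinite (MPath X d M ⟨n, y⟩ w)
  have hweight : ∀ q : Σ y : {y : X n // d n x y ≠ 0 ∧ (x, y) ∉ M n}, MPath X d M ⟨n, y.1⟩ w,
      MPath.weight X d M ((MPath.firstDownEquiv x w).symm q).1 =
        d n x q.1.1 * MPath.weight X d M q.2 := fun _ => rfl
  calc GammaDown X d M ⟨n + 1, x⟩ w
      = ∑ y : {y : X n // d n x y ≠ 0 ∧ (x, y) ∉ M n}, d n x y * Gamma X d M ⟨n, y⟩ w := by
        rw [GammaDown, ← finsum_subtype_eq_finsum_cond,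
          ← finsum_comp_equiv (MPath.firstDownEquiv x w).symm]
        simp only [hweight, Gamma, finsum_eq_sum_of_fintype, Fintype.sum_sigma, Finset.mul_sum]
    _ = ∑ y : X n with d n x y ≠ 0 ∧ (x, y) ∉ M n, d n x y * Gamma X d M ⟨n, y⟩ w :=
        (Finset.sum_subtype _ (fun y => Finset.mem_filter_univ y)
          (fun y => d n x y * Gamma X d M ⟨n, y⟩ w)).symm
    _ = ∑ y : X n with (x, y) ∉ M n, d n x y * Gamma X d M ⟨n, y⟩ w := by
        refine Finset.sum_subset (by grind) fun y hy hy' => ?_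
        have hzero : d n x y = 0 := by grind
        rw [hzero, zero_mul]

namespace IsAcyclicUnitMatching

theorem gammaUp_eq_mul (hM : IsAcyclicUnitMatching d M) {z : X (n + 1)} {y : X n}
    (hzy : (z, y) ∈ M n) (w : Σ i, X i) [Finite (MPath X d M ⟨n + 1, z⟩ w)] :
    GammaUp X d M ⟨n, y⟩ w = -Ring.inverse (d n z y) * Gamma X d M ⟨n + 1, z⟩ w := by
  have hunique : ∀ z', (z', y) ∈ M n → z' = z := fun z' hz' => hM.upper_unique hz' hzy
  rw [GammaUp, ← finsum_subtype_eq_finsum_cond,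
    ← finsum_comp_equiv (MPath.firstUpEquiv hzy hunique w).symm, Gamma,
    mul_finsum' _ _ (Set.toFinite _)]
  rfl

theorem degree_le_or_isMatchedUpper (hM : IsAcyclicUnitMatching d M)
    (hvw : Relation.ReflTransGen (MStep X d M) v w) :
    w.1 ≤ v.1 ∨ w.1 = v.1 + 1 ∧ IsMatchedUpper M w := by
  induction hvw with
  | refl => exact .inl le_rfl
  | tail _ hstep ih =>
    cases hstep with
    | down => exact .inl (by grind)
    | up i c c' hmem =>
      rcases ih with hle | ⟨-, hupper⟩
      · exact (Nat.le_or_eq_of_le_succ (Nat.succ_le_succ hle)).imp_right fun h => ⟨h, ⟨hmem⟩⟩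
      · exact absurd hupper (hM.not_isMatchedUpper ⟨hmem⟩)

theorem gammaDown_of_degree_le (hM : IsAcyclicUnitMatching d M) (hw : ¬ IsMatchedUpper M w)
    (hvw : v.1 ≤ w.1) : GammaDown X d M v w = 0 := by
  refine finsum_mem_eq_zero_of_forall_eq_zero fun p hp => ?_
  cases p with
  | nil => exact hp.elim
  | up => exact hp.elim
  | down i _ _ _ _ _ p =>
    rcases hM.degree_le_or_isMatchedUpper p.reflTransGen with hle | ⟨-, hupper⟩
    · exact absurd (hvw.trans hle) (Nat.not_succ_le_self i)
    · exact absurd hupper hw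

section Finiteness

variable [∀ i, Finite (X i)]

theorem finite_reachable (hM : IsAcyclicUnitMatching d M) (v : Σ i, X i) :
    {w | Relation.ReflTransGen (MStep X d M) v w}.Finite := by
  have hfin : (⋃ i ∈ Set.Iic (v.1 + 1), Set.range (Sigma.mk i : X i → Σ i, X i)).Finite :=
    (Set.finite_Iic _).biUnion fun _ _ => Set.finite_range _
  refine hfin.subset fun w hvw => Set.mem_biUnion ?_ (Set.mem_range_self w.2)
  exact (hM.degree_le_or_isMatchedUpper hvw).elim Nat.le_succ_of_le fun h => h.1.le

theorem wellFounded (hM : IsAcyclicUnitMatching d M) : WellFounded (flip (MStep X d M)) :=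
  wellFounded_flip_of_finite_reachable hM.finite_reachable hM.acyclic

theorem finite_path (hM : IsAcyclicUnitMatching d M) (v w : Σ i, X i) :
    Finite (MPath X d M v w) := by
  induction v using hM.wellFounded.induction with
  | _ v ih =>
    have : Finite {u // MStep X d M v u} :=
      (hM.finite_reachable v).subset fun _ => Relation.ReflTransGen.single
    have : ∀ u : {u // MStep X d M v u}, Finite (MPath X d M u.1 w) := fun u => ih u.1 u.2
    exact Finite.of_injective _ MPath.uncons_injective

theorem gamma_of_not_isMatchedLower (hM : IsAcyclicUnitMatching d M) (hv : ¬ IsMatchedLower M v) :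
    Gamma X d M v w = (if v = w then 1 else 0) + GammaDown X d M v w := by
  have := hM.finite_path v w
  rw [gamma_eq_add, gammaUp_of_not_isMatchedLower hv, add_zero]

theorem gamma_eq_gammaUp (hM : IsAcyclicUnitMatching d M) (hv : IsMatchedLower M v)
    (hw : CriticalV X M w) (hvw : v.1 ≤ w.1) : Gamma X d M v w = GammaUp X d M v w := by
  have := hM.finite_path v w
  obtain ⟨hw_upper, hw_lower⟩ := criticalV_iff.mp hw
  have hne : v ≠ w := fun h => hw_lower (h ▸ hv)
  rw [gamma_eq_add, if_neg hne, zero_add, hM.gammaDown_of_degree_le hw_upper hvw, zero_add]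

theorem gamma_eq_ite (hM : IsAcyclicUnitMatching d M) (hv : ¬ IsMatchedLower M v)
    (hw : ¬ IsMatchedUpper M w) (hvw : v.1 ≤ w.1) :
    Gamma X d M v w = if v = w then 1 else 0 := by
  rw [hM.gamma_of_not_isMatchedLower hv, hM.gammaDown_of_degree_le hw hvw, add_zero]

end Finiteness

variable [∀ i, Fintype (X i)] {N : Type*} [AddCommGroup N] [Module R N]

theorem eq_zero_of_sum_smul_eq_zero (hM : IsAcyclicUnitMatching d M) {H : X n → N}
    (hH : ∀ x, ¬ IsMatchedLower M ⟨n, x⟩ → H x = 0)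
    (hd : ∀ z, IsMatchedUpper M ⟨n + 1, z⟩ → ∑ x, d n z x • H x = 0) (x : X n) : H x = 0 := by
  induction x using
    (InvImage.wf (Sigma.mk n : X n → Σ i, X i) hM.wellFounded.transGen).induction with
  | _ x ih =>
    by_cases hx : IsMatchedLower M ⟨n, x⟩
    · obtain @⟨_, z, _, hzx⟩ := hx
      have hother : ∀ x', x' ≠ x → d n z x' • H x' = 0 := by
        intro x' hne
        by_cases hzx' : d n z x' = 0
        · rw [hzx', zero_smul]
        · have hunmatched : (z, x') ∉ M n := fun h => hne (hM.lower_unique h hzx)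
          have hpath : Relation.TransGen (flip (MStep X d M)) ⟨n, x'⟩ ⟨n, x⟩ :=
            .head (.down n z x' hzx' hunmatched) (.single (.up n z x hzx))
          rw [ih x' hpath, smul_zero]
      have hsum := hd z ⟨hzx⟩
      rw [Fintype.sum_eq_single x hother] at hsum
      exact (hM.isUnit hzx).smul_eq_zero.mp hsum
    · exact hH x hx

theorem sum_mul_gamma_eq_gammaDown (hM : IsAcyclicUnitMatching d M) {x : X (n + 1)}
    (hx : ¬ IsMatchedUpper M ⟨n + 1, x⟩) (w : Σ i, X i) :
    ∑ y, d n x y * Gamma X d M ⟨n, y⟩ w = GammaDown X d M ⟨n + 1, x⟩ w := by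
  have := hM.finite_path (w := w)
  have hunmatched : ∀ y, (x, y) ∉ M n := fun y hxy => hx ⟨hxy⟩
  simp [gammaDown_eq_sum, hunmatched]

theorem sum_mul_gamma_eq_zero (hM : IsAcyclicUnitMatching d M) {z : X (n + 1)}
    (hz : IsMatchedUpper M ⟨n + 1, z⟩) {c : X n} (hc : CriticalV X M ⟨n, c⟩) :
    ∑ y, d n z y * Gamma X d M ⟨n, y⟩ ⟨n, c⟩ = 0 := by
  obtain @⟨_, _, y, hzy⟩ := hz
  have hpaths := fun v => hM.finite_path v ⟨n, c⟩
  have hfilter : ({x | (z, x) ∈ M n} : Finset (X n)) = {y} := by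
    ext x
    simpa using ⟨fun hzx => hM.lower_unique hzx hzy, fun h => h ▸ hzy⟩
  have hy : Gamma X d M ⟨n, y⟩ ⟨n, c⟩ =
      -Ring.inverse (d n z y) * GammaDown X d M ⟨n + 1, z⟩ ⟨n, c⟩ := by
    have hz_lower : ¬ IsMatchedLower M ⟨n + 1, z⟩ := fun h => hM.not_isMatchedUpper h ⟨hzy⟩
    rw [hM.gamma_eq_gammaUp ⟨hzy⟩ hc le_rfl, hM.gammaUp_eq_mul hzy,
      hM.gamma_of_not_isMatchedLower hz_lower, if_neg (by simp), zero_add]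
  calc ∑ y, d n z y * Gamma X d M ⟨n, y⟩ ⟨n, c⟩
      = d n z y * Gamma X d M ⟨n, y⟩ ⟨n, c⟩ + GammaDown X d M ⟨n + 1, z⟩ ⟨n, c⟩ := by
        rw [← Finset.sum_filter_add_sum_filter_not _ fun x => (z, x) ∈ M n, hfilter,
          Finset.sum_singleton, gammaDown_eq_sum]
    _ = 0 := by
        rw [hy, ← mul_assoc, mul_neg, Ring.mul_inverse_cancel _ (hM.isUnit hzy), neg_one_mul,
          neg_add_cancel]

theorem eq_sum_gamma_smul (hM : IsAcyclicUnitMatching d M) {H : X n → N}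
    (hH : ∀ x, IsMatchedUpper M ⟨n, x⟩ → H x = 0)
    (hd : ∀ z, IsMatchedUpper M ⟨n + 1, z⟩ → ∑ x, d n z x • H x = 0) (x : X n) :
    H x = ∑ c : Crit X M n, Gamma X d M ⟨n, x⟩ ⟨n, c.1⟩ • H c := by
  refine sub_eq_zero.mp (hM.eq_zero_of_sum_smul_eq_zero (H := fun x => H x - ∑ c : Crit X M n,
    Gamma X d M ⟨n, x⟩ ⟨n, c.1⟩ • H c) (fun x hx => ?_) (fun z hz => ?_) x)
  · have hgamma : ∀ c : Crit X M n,
        Gamma X d M ⟨n, x⟩ ⟨n, c.1⟩ = if x = c.1 then 1 else 0 := fun c => by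
      simpa using hM.gamma_eq_ite hx (criticalV_iff.mp c.2).1 le_rfl
    simp only [hgamma, ite_smul, one_smul, zero_smul, sub_eq_zero]
    by_cases hupper : IsMatchedUpper M ⟨n, x⟩
    · have hne : ∀ c : Crit X M n, x ≠ c.1 := by
        rintro c rfl
        exact (criticalV_iff.mp c.2).1 hupper
      simp only [hne, if_false, Finset.sum_const_zero, hH x hupper]
    · have hcrit : CriticalV X M ⟨n, x⟩ := criticalV_iff.mpr ⟨hupper, hx⟩
      rw [Fintype.sum_eq_single ⟨x, hcrit⟩ fun c hc => if_neg fun h => hc (Subtype.ext h.symm),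
        if_pos rfl]
  · simp only [smul_sub, Finset.sum_sub_distrib, hd z hz, Finset.smul_sum, smul_smul, zero_sub]
    rw [Finset.sum_comm, neg_eq_zero]
    refine Finset.sum_eq_zero fun c _ => ?_
    rw [← Finset.sum_smul, hM.sum_mul_gamma_eq_zero hz c.2, zero_smul]

theorem sum_gamma_mul_gammaDown (hC : IsComplexAux X d) (hM : IsAcyclicUnitMatching d M) {i : ℕ}
    (x : X (i + 1)) {c : X i} (hc : CriticalV X M ⟨i, c⟩) :
    ∑ c' : Crit X M (i + 1), Gamma X d M ⟨i + 1, x⟩ ⟨i + 1, c'.1⟩ *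
        GammaDown X d M ⟨i + 1, c'.1⟩ ⟨i, c⟩ =
      ∑ y, d i x y * Gamma X d M ⟨i, y⟩ ⟨i, c⟩ := by
  have hboundary : ∀ z : X (i + 2),
      ∑ x, d (i + 1) z x • ∑ y, d i x y * Gamma X d M ⟨i, y⟩ ⟨i, c⟩ = 0 := by
    intro z
    simp only [smul_eq_mul, Finset.mul_sum, ← mul_assoc]
    rw [Finset.sum_comm]
    simp only [← Finset.sum_mul, hC i z, zero_mul, Finset.sum_const_zero]
  rw [hM.eq_sum_gamma_smul (fun x hx => hM.sum_mul_gamma_eq_zero hx hc)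
    (fun z _ => hboundary z) x]
  refine Finset.sum_congr rfl fun c' _ => ?_
  rw [hM.sum_mul_gamma_eq_gammaDown (criticalV_iff.mp c'.2).1, smul_eq_mul]

end IsAcyclicUnitMatching

end MorseGraph

theorem gammaDown_eq_sum_gammaUp_gammaDown_general
    (hC : IsComplexAux X d) (hM : IsAcyclicUnitMatching d M)
    (i : ℕ) (α : X (i + 2)) (β : X (i + 1)) (hαβ : (α, β) ∈ M (i + 1))
    (c : X i) (hc : CriticalV X M ⟨i, c⟩) :
    GammaDown X d M ⟨i + 1, β⟩ ⟨i, c⟩ =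
      ∑ c' : Crit X M (i + 1),
        GammaUp X d M ⟨i + 1, β⟩ ⟨i + 1, c'.1⟩ *
          GammaDown X d M ⟨i + 1, c'.1⟩ ⟨i, c⟩ := by
  have hβ : IsMatchedLower M ⟨i + 1, β⟩ := ⟨hαβ⟩
  rw [← hM.sum_mul_gamma_eq_gammaDown (hM.not_isMatchedUpper hβ),
    ← hM.sum_gamma_mul_gammaDown hC β hc]
  exact Finset.sum_congr rfl fun c' _ => by rw [hM.gamma_eq_gammaUp hβ c'.2 le_rfl]

/-- Lemma B.1 (P2).  If `M` is an acyclic matching on the graph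
`G(C)` of the chain complex `C`, then for every matched edge `(α, β) ∈ M` with
`α ∈ X_{i+1}`, `β ∈ X_i`, and every critical basis element `c ∈ X_{i-1}^M`,
`Γ↓(β,c) = ∑_{c' ∈ X_i^M} Γ↑(β,c') Γ↓(c',c)`.
(Here the degrees are shifted by one: `β` lives in degree `i+1` of our indexing.) -/
theorem gammaDown_eq_sum_gammaUp_gammaDown
    (hC : IsComplexAux X d) (hM : IsAcyclicMatching X d M)
    (i : ℕ) (α : X (i + 2)) (β : X (i + 1)) (hαβ : (α, β) ∈ M (i + 1))
    (c : X i) (hc : CriticalV X M ⟨i, c⟩) :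
    GammaDown X d M ⟨i + 1, β⟩ ⟨i, c⟩ =
      ∑ c' : Crit X M (i + 1),
        GammaUp X d M ⟨i + 1, β⟩ ⟨i + 1, c'.1⟩ *
          GammaDown X d M ⟨i + 1, c'.1⟩ ⟨i, c⟩ :=
  gammaDown_eq_sum_gammaUp_gammaDown_general X d M hC hM.isAcyclicUnitMatching i α β hαβ c hc

end ADMT

end
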